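/- arXiv:2505.20351 — 4 statements merged into one kernel-verified Lean document; each statement's English description precedes it below -/
import Mathlib

section
/- Let ε > 0, let X and Y be positive natural numbers, set Z = X/Y, let L ~ Lap(log(2)/ε), and set Z̃ = Z·e^L. Then for any α with 0 < α < Z, P(|Z̃ − Z| ≥ α) = (1/2)·(α/Z + 1)^{−ε/log(2)} + (1/2)·(1 − α/Z)^{ε/log(2)}; that is, the NoisedLog mechanism is (α, β)-sample accurate with β equal to this expression, which depends only on the ratio Z and not on the magnitudes of X and Y. -/
open MeasureTheory ProbabilityTheory Filter

/-- The Laplace distribution on `ℝ` with location `μ` and scale `b`,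
given by the density `x ↦ (1/(2b)) * exp (-|x - μ| / b)`. -/
noncomputable def laplaceMeasure (μ b : ℝ) : Measure ℝ :=
  MeasureTheory.volume.withDensity
    fun x => ENNReal.ofReal ((1 / (2 * b)) * Real.exp (-|x - μ| / b))

lemma laplace_Iic (b : ℝ) (hb : 0 < b) (t : ℝ) (ht : t ≤ 0) :
    laplaceMeasure 0 b (Set.Iic t) = ENNReal.ofReal (1 / 2 * Real.exp (b⁻¹ * t)) := by
  have hc : 0 < b⁻¹ := inv_pos.mpr hb
  rw [laplaceMeasure, withDensity_apply _ measurableSet_Iic]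
  have h1 : ∫⁻ x in Set.Iic t, ENNReal.ofReal ((1 / (2 * b)) * Real.exp (-|x - 0| / b))
      = ∫⁻ x in Set.Iic t, ENNReal.ofReal ((1 / (2 * b)) * Real.exp (b⁻¹ * x)) := by
    refine setLIntegral_congr_fun measurableSet_Iic (fun x hx => ?_)
    have hx : x ≤ t := hx
    simp only [sub_zero]
    rw [abs_of_nonpos (hx.trans ht), neg_neg, div_eq_inv_mul x b]
  rw [h1, ← ofReal_integral_eq_lintegral_ofReal
    ((integrableOn_exp_mul_Iic hc t).const_mul _) (ae_of_all _ fun x => by positivity),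
    integral_const_mul, integral_exp_mul_Iic hc]
  congr 1
  field_simp

lemma laplace_Ici (b : ℝ) (hb : 0 < b) (t : ℝ) (ht : 0 ≤ t) :
    laplaceMeasure 0 b (Set.Ici t) = ENNReal.ofReal (1 / 2 * Real.exp (-b⁻¹ * t)) := by
  have hc : -b⁻¹ < 0 := neg_lt_zero.mpr (inv_pos.mpr hb)
  rw [laplaceMeasure, withDensity_apply _ measurableSet_Ici, setLIntegral_congr Ioi_ae_eq_Ici.symm]
  have h1 : ∫⁻ x in Set.Ioi t, ENNReal.ofReal ((1 / (2 * b)) * Real.exp (-|x - 0| / b))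
      = ∫⁻ x in Set.Ioi t, ENNReal.ofReal ((1 / (2 * b)) * Real.exp (-b⁻¹ * x)) := by
    refine setLIntegral_congr_fun measurableSet_Ioi (fun x hx => ?_)
    have hx : t < x := hx
    simp only [sub_zero]
    rw [abs_of_nonneg (ht.trans hx.le), neg_div, div_eq_inv_mul x b, neg_mul]
  rw [h1, ← ofReal_integral_eq_lintegral_ofReal
    ((integrableOn_exp_mul_Ioi hc t).const_mul _) (ae_of_all _ fun x => by positivity),
    integral_const_mul, integral_exp_mul_Ioi hc]
  congr 1
  field_simp

/-- **Sample accuracy of the `NoisedLog` mechanism.**  With `Z = X/Y`,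
`L ~ Lap(log 2 / ε)` and `Z̃ = Z·e^L`, for `0 < α < Z` one has
`P(|Z̃ − Z| ≥ α) = (1/2)(α/Z + 1)^{−ε/log 2} + (1/2)(1 − α/Z)^{ε/log 2}`,
an expression depending only on the ratio `Z`. -/
theorem noisedLog_sample_accuracy {Ω : Type*} [MeasurableSpace Ω]
    (P : Measure Ω) [IsProbabilityMeasure P]
    (ε : ℝ) (hε : 0 < ε) (X Y : ℕ) (hX : 0 < X) (hY : 0 < Y)
    (L : Ω → ℝ) (hm : Measurable L)
    (hlaw : Measure.map L P = laplaceMeasure 0 (Real.log 2 / ε))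
    (α : ℝ) (hα0 : 0 < α) (hαZ : α < (X : ℝ) / (Y : ℝ)) :
    (P {ω | α ≤ |(X : ℝ) / (Y : ℝ) * Real.exp (L ω) - (X : ℝ) / (Y : ℝ)|}).toReal =
      (1 / 2) * (α / ((X : ℝ) / (Y : ℝ)) + 1) ^ (-(ε / Real.log 2)) +
        (1 / 2) * (1 - α / ((X : ℝ) / (Y : ℝ))) ^ (ε / Real.log 2) := by
  have hZ : 0 < (X : ℝ) / (Y : ℝ) := hα0.trans hαZ
  generalize (X : ℝ) / (Y : ℝ) = Z at *
  have hb : 0 < Real.log 2 / ε := div_pos (Real.log_pos (by norm_num)) hε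
  have hr0 : 0 < α / Z := div_pos hα0 hZ
  have hr1 : α / Z < 1 := (div_lt_one hZ).mpr hαZ
  have hα : α = Z * (α / Z) := by field_simp
  generalize α / Z = r at *
  have hset : {ω | α ≤ |Z * Real.exp (L ω) - Z|} =
      L ⁻¹' (Set.Ici (Real.log (r + 1)) ∪ Set.Iic (Real.log (1 - r))) := by
    ext ω
    simp only [Set.mem_setOf_eq, Set.mem_preimage, Set.mem_union, Set.mem_Ici, Set.mem_Iic]
    rw [Real.log_le_iff_le_exp (by linarith), Real.le_log_iff_exp_le (by linarith),
      show Z * Real.exp (L ω) - Z = Z * (Real.exp (L ω) - 1) by ring, abs_mul, abs_of_pos hZ, hα,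
      mul_le_mul_iff_right₀ hZ, le_abs]
    constructor <;> rintro (h | h)
    · left; linarith
    · right; linarith
    · left; linarith
    · right; linarith
  have h1 : 0 ≤ Real.log (r + 1) := Real.log_nonneg (by linarith)
  have h2 : Real.log (1 - r) < 0 := Real.log_neg (by linarith) (by linarith)
  have hd : Disjoint (Set.Ici (Real.log (r + 1))) (Set.Iic (Real.log (1 - r))) := by
    rw [Set.disjoint_left]
    intro x hx hx'
    simp only [Set.mem_Ici, Set.mem_Iic] at hx hx'
    linarith
  rw [hset, ← Measure.map_apply hm (measurableSet_Ici.union measurableSet_Iic), hlaw,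
    measure_union hd measurableSet_Iic, laplace_Ici _ hb _ h1, laplace_Iic _ hb _ h2.le,
    ENNReal.toReal_add ENNReal.ofReal_ne_top ENNReal.ofReal_ne_top,
    ENNReal.toReal_ofReal (by positivity), ENNReal.toReal_ofReal (by positivity),
    Real.rpow_def_of_pos (by linarith), Real.rpow_def_of_pos (by linarith), inv_div,
    mul_comm (Real.log (r + 1)), mul_comm (Real.log (1 - r))]
end

section
/- Let ε > log(2), let X and Y be positive natural numbers, set Z = X/Y, and let L ~ Lap(log(2)/ε). Then E[Z·e^L] = Z/(1 − (log(2)/ε)²); equivalently, the post-processed estimator (1 − (log(2)/ε)²)·Z·e^L is an unbiased estimator of Z. -/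
open MeasureTheory ProbabilityTheory Filter

theorem laplace_aux (b : ℝ) (hb : 0 < b) (hb1 : b < 1) :
    ∫ x, Real.exp x ∂(laplaceMeasure 0 b) = 1 / (1 - b ^ 2) := by
  unfold laplaceMeasure
  rw [integral_withDensity_eq_integral_toReal_smul (by fun_prop)
    (Filter.Eventually.of_forall fun _ => ENNReal.ofReal_lt_top)]
  have hb' : 1 < 1 / b := by rw [lt_div_iff₀ hb]; linarith
  have e1 : Set.EqOn (fun x : ℝ => (ENNReal.ofReal ((1 / (2 * b)) * Real.exp (-|x - 0| / b))).toReal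
      • Real.exp x) (fun x => (1 / (2 * b)) * Real.exp ((1 / b + 1) * x)) (Set.Iic 0) := by
    intro x hx
    have hx' : x ≤ 0 := hx
    simp only [sub_zero, smul_eq_mul]
    rw [ENNReal.toReal_ofReal (by positivity), abs_of_nonpos hx', mul_assoc, ← Real.exp_add]
    congr 2
    ring
  have e2 : Set.EqOn (fun x : ℝ => (ENNReal.ofReal ((1 / (2 * b)) * Real.exp (-|x - 0| / b))).toReal
      • Real.exp x) (fun x => (1 / (2 * b)) * Real.exp ((1 - 1 / b) * x)) (Set.Ioi 0) := by
    intro x hx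
    have hx' : 0 < x := hx
    simp only [sub_zero, smul_eq_mul]
    rw [ENNReal.toReal_ofReal (by positivity), abs_of_pos hx', mul_assoc, ← Real.exp_add]
    congr 2
    ring
  have i1 := (integrableOn_exp_mul_Iic (a := 1 / b + 1) (by linarith) 0).const_mul (1 / (2 * b))
  have i2 := (integrableOn_exp_mul_Ioi (a := 1 - 1 / b) (by linarith) 0).const_mul (1 / (2 * b))
  rw [← intervalIntegral.integral_Iic_add_Ioi
    (IntegrableOn.congr_fun i1 e1.symm measurableSet_Iic)
    (IntegrableOn.congr_fun i2 e2.symm measurableSet_Ioi),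
    setIntegral_congr_fun measurableSet_Iic e1, setIntegral_congr_fun measurableSet_Ioi e2,
    integral_const_mul, integral_const_mul, integral_exp_mul_Iic (by linarith),
    integral_exp_mul_Ioi (by linarith)]
  simp only [mul_zero, Real.exp_zero]
  have h1 : b + 1 ≠ 0 := by linarith
  have h2 : b - 1 ≠ 0 := by linarith
  have h3 : 1 - b ^ 2 ≠ 0 := by nlinarith
  have h4 : 1 / b + 1 = (b + 1) / b := by field_simp; ring
  have h5 : 1 - 1 / b = (b - 1) / b := by field_simp
  rw [h4, h5]
  field_simp
  ring

/-- **Bias of the `NoisedLog` mechanism.**  With `Z = X/Y` and `L ~ Lap(log 2 / ε)`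
for `ε > log 2`, one has `E[Z·e^L] = Z / (1 − (log 2 / ε)²)`; equivalently, multiplying
the output `Z·e^L` by `1 − (log 2 / ε)²` yields an unbiased estimator of `Z`. -/
theorem noisedLog_bias {Ω : Type*} [MeasurableSpace Ω]
    (P : Measure Ω) [IsProbabilityMeasure P]
    (ε : ℝ) (hε : Real.log 2 < ε) (X Y : ℕ) (hX : 0 < X) (hY : 0 < Y)
    (L : Ω → ℝ) (hm : Measurable L)
    (hlaw : Measure.map L P = laplaceMeasure 0 (Real.log 2 / ε)) :
    ∫ ω, (X : ℝ) / (Y : ℝ) * Real.exp (L ω) ∂P =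
      ((X : ℝ) / (Y : ℝ)) / (1 - (Real.log 2 / ε) ^ 2) := by
  have hl : 0 < Real.log 2 := Real.log_pos (by norm_num)
  have h0 : 0 < ε := hl.trans hε
  rw [integral_const_mul, ← integral_map (f := Real.exp) hm.aemeasurable
    (by fun_prop), hlaw, laplace_aux _ (by positivity) (by rw [div_lt_one h0]; exact hε)]
  ring
end

section
/- Let X and Y be natural numbers with X ≥ 2 and Y ≥ 2. Then max{ |X/Y − (X+1)/Y|, |X/Y − (X−1)/Y|, |X/Y − X/(Y+1)|, |X/Y − X/(Y−1)| } = max(1/Y, X/(Y² − Y)); moreover this maximum equals 1/Y when X < Y and equals X/(Y·(Y−1)) when X ≥ Y. (This is the local sensitivity of the ratio statistic X/Y.) -/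
/-- **Local sensitivity of the ratio statistic `X/Y`.**  For counts `X, Y ≥ 2`, the
maximum change of `X/Y` when one of the counts changes by one equals
`max (1/Y) (X/(Y² − Y))`, which is `1/Y` when `X < Y` and `X/(Y(Y−1))` when `X ≥ Y`. -/
theorem ratio_local_sensitivity (X Y : ℕ) (hX : 2 ≤ X) (hY : 2 ≤ Y) :
    (max
        (max |(X : ℝ) / (Y : ℝ) - ((X : ℝ) + 1) / (Y : ℝ)|
          |(X : ℝ) / (Y : ℝ) - ((X : ℝ) - 1) / (Y : ℝ)|)
        (max |(X : ℝ) / (Y : ℝ) - (X : ℝ) / ((Y : ℝ) + 1)|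
          |(X : ℝ) / (Y : ℝ) - (X : ℝ) / ((Y : ℝ) - 1)|) =
      max (1 / (Y : ℝ)) ((X : ℝ) / ((Y : ℝ) ^ 2 - (Y : ℝ)))) ∧
    (X < Y →
      max
          (max |(X : ℝ) / (Y : ℝ) - ((X : ℝ) + 1) / (Y : ℝ)|
            |(X : ℝ) / (Y : ℝ) - ((X : ℝ) - 1) / (Y : ℝ)|)
          (max |(X : ℝ) / (Y : ℝ) - (X : ℝ) / ((Y : ℝ) + 1)|
            |(X : ℝ) / (Y : ℝ) - (X : ℝ) / ((Y : ℝ) - 1)|) = 1 / (Y : ℝ)) ∧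
    (Y ≤ X →
      max
          (max |(X : ℝ) / (Y : ℝ) - ((X : ℝ) + 1) / (Y : ℝ)|
            |(X : ℝ) / (Y : ℝ) - ((X : ℝ) - 1) / (Y : ℝ)|)
          (max |(X : ℝ) / (Y : ℝ) - (X : ℝ) / ((Y : ℝ) + 1)|
            |(X : ℝ) / (Y : ℝ) - (X : ℝ) / ((Y : ℝ) - 1)|) =
        (X : ℝ) / ((Y : ℝ) * ((Y : ℝ) - 1))) := by
  have hx : (2 : ℝ) ≤ X := by exact_mod_cast hX
  have hy : (2 : ℝ) ≤ Y := by exact_mod_cast hY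
  have hy0 : (0 : ℝ) < Y := by linarith
  have hy1 : (0 : ℝ) < (Y : ℝ) - 1 := by linarith
  have hy2 : (0 : ℝ) < (Y : ℝ) + 1 := by linarith
  have hx0 : (0 : ℝ) < X := by linarith
  have h1 : |(X : ℝ) / (Y : ℝ) - ((X : ℝ) + 1) / (Y : ℝ)| = 1 / Y := by
    rw [show (X : ℝ) / (Y : ℝ) - ((X : ℝ) + 1) / (Y : ℝ) = -(1 / Y) by ring, abs_neg,
      abs_of_pos (by positivity)]
  have h2 : |(X : ℝ) / (Y : ℝ) - ((X : ℝ) - 1) / (Y : ℝ)| = 1 / Y := by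
    rw [show (X : ℝ) / (Y : ℝ) - ((X : ℝ) - 1) / (Y : ℝ) = 1 / Y by ring,
      abs_of_pos (by positivity)]
  have h3 : |(X : ℝ) / (Y : ℝ) - (X : ℝ) / ((Y : ℝ) + 1)| = X / (Y * (Y + 1)) := by
    rw [show (X : ℝ) / (Y : ℝ) - (X : ℝ) / ((Y : ℝ) + 1) = X / (Y * (Y + 1)) by
      field_simp; ring, abs_of_pos (by positivity)]
  have h4 : |(X : ℝ) / (Y : ℝ) - (X : ℝ) / ((Y : ℝ) - 1)| = X / (Y * (Y - 1)) := by
    rw [show (X : ℝ) / (Y : ℝ) - (X : ℝ) / ((Y : ℝ) - 1) = -(X / (Y * (Y - 1))) by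
      have := hy1.ne'
      field_simp; ring, abs_neg, abs_of_pos (by positivity)]
  have h5 : (X : ℝ) / (Y * (Y + 1)) ≤ X / (Y * (Y - 1)) := by
    apply div_le_div_of_nonneg_left hx0.le (by positivity)
    nlinarith
  have h6 : (Y : ℝ) ^ 2 - Y = Y * (Y - 1) := by ring
  have h7 : (X : ℝ) / (Y * (Y - 1)) = 1 / Y * (X / (Y - 1)) := by
    rw [div_mul_div_comm, one_mul]
  have h8 : (0 : ℝ) < 1 / Y := by positivity
  rw [h1, h2, h3, h4, h6, max_self, max_eq_right h5]
  refine ⟨rfl, fun h => max_eq_left ?_, fun h => max_eq_right ?_⟩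
  · have h' : (X : ℝ) + 1 ≤ Y := by exact_mod_cast h
    rw [h7]
    apply mul_le_of_le_one_right h8.le
    rw [div_le_one hy1]
    linarith
  · have h' : (Y : ℝ) ≤ X := by exact_mod_cast h
    rw [h7]
    apply le_mul_of_one_le_right h8.le
    rw [one_le_div hy1]
    linarith
end

section
/- For natural numbers X' ≥ 1 and Y' ≥ 2, define LS(X', Y') = 1/Y' if X' < Y' and LS(X', Y') = X'/(Y'·(Y'−1)) if X' ≥ Y'. Let n_x, n_y, X, Y, m be natural numbers with 1 ≤ X ≤ n_x, 1 ≤ Y ≤ n_y, m ≥ 1, and Y − m ≥ 2. Then the maximum of LS(X', Y') over all natural numbers X', Y' with 1 ≤ X' ≤ n_x, 1 ≤ Y' ≤ n_y, Y' ≥ 2, and |X − X'| + |Y − Y'| = m equals 1/(Y − m) if X < Y − m, and equals X/((Y − m)·(Y − m − 1)) if X ≥ Y − m. -/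
/-- The local sensitivity of the ratio statistic `X'/Y'` for counts `X' ≥ 1`, `Y' ≥ 2`:
`1/Y'` if `X' < Y'` and `X'/(Y'(Y'−1))` if `X' ≥ Y'`. -/
noncomputable def LS (X' Y' : ℕ) : ℝ :=
  if X' < Y' then 1 / (Y' : ℝ) else (X' : ℝ) / ((Y' : ℝ) * ((Y' : ℝ) - 1))

theorem LS_eq (X e : ℕ) :
    LS X (e + 2) = ((max X (e + 1) : ℕ) : ℝ) / (((e : ℝ) + 2) * ((e : ℝ) + 1)) := by
  unfold LS
  split_ifs with h
  · rw [max_eq_right (by omega)]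
    push_cast
    field_simp
  · rw [max_eq_left (by omega)]
    push_cast
    congr 2
    ring

theorem LS_eq' (X e k : ℕ) :
    LS X (e + 2 + k) =
      ((max X (e + 1 + k) : ℕ) : ℝ) / (((e : ℝ) + 2 + k) * ((e : ℝ) + 1 + k)) := by
  have h := LS_eq X (e + k)
  rw [show e + 2 + k = e + k + 2 by ring, h, show e + k + 1 = e + 1 + k by ring]
  push_cast
  congr 2 <;> ring

/-- **Inner maximization in the smooth sensitivity of a ratio of counts.**  The maximum
local sensitivity over all datasets at Hamming distance exactly `m` from `(X, Y)` (one
count changing by one per moved individual, counts staying in range) equals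
`1/(Y−m)` if `X < Y−m` and `X/((Y−m)(Y−m−1))` if `X ≥ Y−m`. -/
theorem smooth_sensitivity_inner_max (nx ny X Y m : ℕ)
    (hX1 : 1 ≤ X) (hXn : X ≤ nx) (hY1 : 1 ≤ Y) (hYn : Y ≤ ny)
    (hm : 1 ≤ m) (hYm : m + 2 ≤ Y) :
    IsGreatest
      {v : ℝ | ∃ X' Y' : ℕ,
        1 ≤ X' ∧ X' ≤ nx ∧ 1 ≤ Y' ∧ Y' ≤ ny ∧ 2 ≤ Y' ∧
        ((X : ℤ) - (X' : ℤ)).natAbs + ((Y : ℤ) - (Y' : ℤ)).natAbs = m ∧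
        v = LS X' Y'}
      (if X < Y - m then 1 / ((Y - m : ℕ) : ℝ)
       else (X : ℝ) / (((Y - m : ℕ) : ℝ) * (((Y - m : ℕ) : ℝ) - 1))) := by
  obtain ⟨e, rfl⟩ : ∃ e, Y = m + (e + 2) := ⟨Y - m - 2, by omega⟩
  have hd : m + (e + 2) - m = e + 2 := by omega
  rw [hd]
  constructor
  · refine ⟨X, e + 2, hX1, hXn, by omega, by omega, by omega, by omega, rfl⟩
  · rintro v ⟨X', Y', h1, h2, h3, h4, h5, h6, rfl⟩
    obtain ⟨k, rfl⟩ : ∃ k, Y' = e + 2 + k := ⟨Y' - (e + 2), by omega⟩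
    have hX' : X' ≤ X + k := by omega
    change _ ≤ LS X (e + 2)
    rw [LS_eq, LS_eq' X' e k]
    have hM1 : X' ≤ max X (e + 1) + k := by omega
    have hM2 : max X' (e + 1 + k) ≤ max X (e + 1) + k := by omega
    have hM3 : e + 1 ≤ max X (e + 1) := by omega
    generalize max X' (e + 1 + k) = N at *
    generalize max X (e + 1) = M at *
    rw [div_le_div_iff₀ (by positivity) (by positivity)]
    norm_cast
    calc N * ((e + 2) * (e + 1)) ≤ (M + k) * ((e + 2) * (e + 1)) := by gcongr
      _ ≤ M * ((e + 2 + k) * (e + 1 + k)) := by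
        have h := Nat.mul_le_mul_left (k * (e + 2)) hM3
        nlinarith [Nat.zero_le (M * k * k), Nat.zero_le (M * k * (e + 1))]
end
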